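/- arXiv:2503.01663 — 2 statements merged into one kernel-verified Lean document; each statement's English description precedes it below -/
import Mathlib

section
/- In the two-party, two-election model with presidential win-probability function f and parliamentary win-probability function g, the probability that party a sweeps both elections is at least as large when the elections are held simultaneously as when they are held on separate dates: Σ_{S ⊆ H} μ_p(S)·f(S)·g(S) ≥ (Σ_{S ⊆ H} μ_p(S)·f(S))·(Σ_{S ⊆ H} μ_p(S)·g(S)). -/
open Finset

/-- Product Bernoulli measure on subsets of `H = Fin m`. -/
def bern {m : ℕ} (p : Fin m → ℝ) (S : Finset (Fin m)) : ℝ :=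
  (∏ h ∈ S, p h) * ∏ h ∈ Sᶜ, (1 - p h)

/-- Presidential win-probability for party `a` (with supporter set `A`) given
turnout `S`: win on a strict majority of cast votes, ties broken by a fair coin. -/
noncomputable def presWin {m : ℕ} (A : Finset (Fin m)) (S : Finset (Fin m)) : ℝ :=
  if (S \ A).card < (S ∩ A).card then 1
  else if (S ∩ A).card = (S \ A).card then 1 / 2 else 0

/-- Probability that party `a` is awarded district `D` given turnout `S`. -/
noncomputable def distWin {m : ℕ} (A D S : Finset (Fin m)) : ℝ :=
  if ((S ∩ D) \ A).card < (S ∩ A ∩ D).card then 1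
  else if (S ∩ A ∩ D).card = ((S ∩ D) \ A).card then 1 / 2 else 0

/-- Probability of winning parliament given `w` districts out of `k`:  a strict
majority of the districts wins, an exact tie is broken by a fair coin. -/
noncomputable def majOf (k w : ℕ) : ℝ :=
  if k < 2 * w then 1 else if 2 * w = k then 1 / 2 else 0

/-- Parliamentary win-probability for party `a` (supporter set `A`, districts `D`)
given turnout `S`: each district is awarded independently with probability
`distWin A (D j) S`, and party `a` wins parliament on a majority of districts. -/
noncomputable def parlWin {m k : ℕ} (A : Finset (Fin m)) (D : Fin k → Finset (Fin m))
    (S : Finset (Fin m)) : ℝ :=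
  ∑ W : Finset (Fin k),
    (∏ j ∈ W, distWin A (D j) S) * (∏ j ∈ Wᶜ, (1 - distWin A (D j) S)) * majOf k W.card

lemma bern_eq_prod {m : ℕ} (p : Fin m → ℝ) (S : Finset (Fin m)) :
    bern p S = ∏ h, if h ∈ S then p h else 1 - p h := by
  rw [bern, Finset.prod_ite]
  congr 2 <;> ext h <;> simp

lemma sum_bern {m : ℕ} (p : Fin m → ℝ) : ∑ S, bern p S = 1 := by
  simp only [bern, ← Fintype.prod_add, add_sub_cancel, Finset.prod_const_one]

lemma bern_nonneg {m : ℕ} {p : Fin m → ℝ} (hp : ∀ h, 0 ≤ p h ∧ p h ≤ 1) (S : Finset (Fin m)) :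
    0 ≤ bern p S :=
  mul_nonneg (Finset.prod_nonneg fun h _ => (hp h).1)
    (Finset.prod_nonneg fun h _ => sub_nonneg.2 (hp h).2)

/-- The Holley lattice condition for two ordered product Bernoulli measures. -/
lemma bern_mul_bern_le {m : ℕ} {p q : Fin m → ℝ} (hp : ∀ h, 0 ≤ p h ∧ p h ≤ 1)
    (hq : ∀ h, 0 ≤ q h ∧ q h ≤ 1) (hpq : ∀ h, p h ≤ q h) (S T : Finset (Fin m)) :
    bern p S * bern q T ≤ bern p (S ⊓ T) * bern q (S ⊔ T) := by
  simp only [bern_eq_prod, ← Finset.prod_mul_distrib]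
  refine Finset.prod_le_prod (fun h _ => ?_) fun h _ => ?_
  all_goals
    obtain ⟨hp0, hp1⟩ := hp h
    obtain ⟨hq0, hq1⟩ := hq h
    have := hpq h
  · exact mul_nonneg (by split_ifs <;> linarith) (by split_ifs <;> linarith)
  · by_cases hS : h ∈ S <;> by_cases hT : h ∈ T <;> simp [hS, hT]
    nlinarith

/-- The expectation of a monotone function is monotone in the Bernoulli parameters. -/
lemma sum_bern_mul_le {m : ℕ} {p q : Fin m → ℝ} (hp : ∀ h, 0 ≤ p h ∧ p h ≤ 1)
    (hq : ∀ h, 0 ≤ q h ∧ q h ≤ 1) (hpq : ∀ h, p h ≤ q h) {φ : Finset (Fin m) → ℝ}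
    (hφ₀ : 0 ≤ φ) (hφ : Monotone φ) :
    ∑ S, bern p S * φ S ≤ ∑ S, bern q S * φ S := by
  simpa only [mul_comm] using holley (bern p) (bern q) φ hφ₀ (bern_nonneg hp) (bern_nonneg hq) hφ
    ((sum_bern p).trans (sum_bern q).symm) (bern_mul_bern_le hp hq hpq)

lemma majOf_nonneg (k w : ℕ) : 0 ≤ majOf k w := by
  unfold majOf; split_ifs <;> norm_num

lemma majOf_mono (k : ℕ) : Monotone (majOf k) := by
  intro v w h
  unfold majOf; split_ifs <;> first | omega | norm_num

lemma distWin_mem {m : ℕ} (A D S : Finset (Fin m)) : 0 ≤ distWin A D S ∧ distWin A D S ≤ 1 := by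
  unfold distWin; split_ifs <;> norm_num

lemma presWin_eq_distWin {m : ℕ} (A S : Finset (Fin m)) : presWin A S = distWin A univ S := by
  simp [presWin, distWin]

/-- Flipping the status of the opponents makes district wins monotone. -/
lemma distWin_symmDiff_mono {m : ℕ} (A D : Finset (Fin m)) :
    Monotone fun T => distWin A D (symmDiff T Aᶜ) := by
  intro S T hST
  have hA : (symmDiff S Aᶜ ∩ A ∩ D).card ≤ (symmDiff T Aᶜ ∩ A ∩ D).card := by
    refine Finset.card_le_card fun h => ?_
    have := @hST h
    simp only [Finset.mem_inter, Finset.mem_symmDiff, Finset.mem_compl]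
    tauto
  have hB : ((symmDiff T Aᶜ ∩ D) \ A).card ≤ ((symmDiff S Aᶜ ∩ D) \ A).card := by
    refine Finset.card_le_card fun h => ?_
    have := @hST h
    simp only [Finset.mem_inter, Finset.mem_sdiff, Finset.mem_symmDiff, Finset.mem_compl]
    tauto
  dsimp only [distWin]
  split_ifs <;> first | omega | norm_num

lemma parlWin_eq_sum_bern {m k : ℕ} (A : Finset (Fin m)) (D : Fin k → Finset (Fin m))
    (S : Finset (Fin m)) :
    parlWin A D S = ∑ W, bern (fun j => distWin A (D j) S) W * majOf k W.card := rfl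

lemma parlWin_nonneg {m k : ℕ} (A : Finset (Fin m)) (D : Fin k → Finset (Fin m))
    (S : Finset (Fin m)) : 0 ≤ parlWin A D S :=
  Finset.sum_nonneg fun W _ =>
    mul_nonneg (bern_nonneg (fun j => distWin_mem A (D j) S) W) (majOf_nonneg _ _)

lemma parlWin_symmDiff_mono {m k : ℕ} (A : Finset (Fin m)) (D : Fin k → Finset (Fin m)) :
    Monotone fun T => parlWin A D (symmDiff T Aᶜ) := by
  intro S T hST
  simp only [parlWin_eq_sum_bern]
  exact sum_bern_mul_le (fun j => distWin_mem _ _ _) (fun j => distWin_mem _ _ _)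
    (fun j => distWin_symmDiff_mono A (D j) hST) (fun W => majOf_nonneg _ _)
    fun V W h => majOf_mono k (Finset.card_le_card h)

lemma bern_symmDiff_compl {m : ℕ} (p : Fin m → ℝ) (A T : Finset (Fin m)) :
    bern p (symmDiff T Aᶜ) = bern (fun h => if h ∈ A then p h else 1 - p h) T := by
  simp only [bern_eq_prod]
  refine Finset.prod_congr rfl fun h _ => ?_
  by_cases hA : h ∈ A <;> by_cases hT : h ∈ T <;> simp [Finset.mem_symmDiff, hA, hT]

lemma sum_symmDiff {m : ℕ} (B : Finset (Fin m)) (F : Finset (Fin m) → ℝ) :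
    ∑ S, F (symmDiff S B) = ∑ S, F S :=
  (symmDiff_left_involutive B).bijective.sum_comp F

/-- In the two-party, two-election model, the probability that party `a` sweeps both
the presidential and the parliamentary election is at least as large when the two
elections are held simultaneously as when they are held on separate dates. -/
theorem simultaneous_sweep_ge {m k : ℕ} (A : Finset (Fin m))
    (D : Fin k → Finset (Fin m)) (hD : ∀ h : Fin m, ∃! j, h ∈ D j)
    (p : Fin m → ℝ) (hp : ∀ h, 0 ≤ p h ∧ p h ≤ 1) :
    (∑ S : Finset (Fin m), bern p S * presWin A S) *
      (∑ S : Finset (Fin m), bern p S * parlWin A D S) ≤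
    ∑ S : Finset (Fin m), bern p S * presWin A S * parlWin A D S := by
  rw [← sum_symmDiff Aᶜ (fun S => bern p S * presWin A S),
    ← sum_symmDiff Aᶜ (fun S => bern p S * parlWin A D S),
    ← sum_symmDiff Aᶜ (fun S => bern p S * presWin A S * parlWin A D S)]
  simp only [bern_symmDiff_compl, presWin_eq_distWin, mul_assoc]
  have hq : ∀ h, 0 ≤ (if h ∈ A then p h else 1 - p h) ∧ (if h ∈ A then p h else 1 - p h) ≤ 1 := by
    intro h
    obtain ⟨h0, h1⟩ := hp h
    split_ifs <;> constructor <;> linarith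
  have key := fkg _ _ _ (bern_nonneg hq) (fun T => (distWin_mem A univ (symmDiff T Aᶜ)).1)
    (fun T => parlWin_nonneg A D (symmDiff T Aᶜ)) (distWin_symmDiff_mono A univ)
    (parlWin_symmDiff_mono A D) (bern_mul_bern_le hq hq fun _ => le_rfl)
  rwa [sum_bern, one_mul] at key
end

section
/- Let H = {1,…,m} and L = {1,…,n} be finite sets, let p = (p₁,…,p_m) ∈ [0,1]^m, and let F = (f₁,…,f_n) be an aligned tuple of nonnegative real-valued functions on the power set of H. Let Π^simul = (π₁,…,π_m) be the fully simultaneous schedule in which π_h is the trivial partition {L} for every h. Then for every tuple Π of partitions of L, E(Π^simul, p, F) ≥ E(Π, p, F); that is, the fully simultaneous polling schedule maximizes E over all staggered schedules. -/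
open Finset

/-- Weight of a block `M` of a partition relative to a turnout set `S`. -/
def blockWeight {n : ℕ} (p : ℝ) (M S : Finset (Fin n)) : ℝ :=
  if M ⊆ S then p else if M ∩ S = ∅ then 1 - p else 0

/-- The measure `μ_{π,p}` on subsets of `L = Fin n`. -/
def partMeasure {n : ℕ} (pt : Finpartition (univ : Finset (Fin n))) (p : ℝ)
    (S : Finset (Fin n)) : ℝ :=
  ∏ M ∈ pt.parts, blockWeight p M S

/-- `L_h(T) = {l : (h,l) ∈ T}`. -/
def Lh {m n : ℕ} (h : Fin m) (T : Finset (Fin m × Fin n)) : Finset (Fin n) :=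
  univ.filter fun l => (h, l) ∈ T

/-- `H_l(T) = {h : (h,l) ∈ T}`. -/
def Hl {m n : ℕ} (l : Fin n) (T : Finset (Fin m × Fin n)) : Finset (Fin m) :=
  univ.filter fun h => (h, l) ∈ T

/-- The measure `μ_{Π,p}` on subsets of `H × L`. -/
def schedMeasure {m n : ℕ} (Sch : Fin m → Finpartition (univ : Finset (Fin n)))
    (p : Fin m → ℝ) (T : Finset (Fin m × Fin n)) : ℝ :=
  ∏ h, partMeasure (Sch h) (p h) (Lh h T)

/-- `E(Π, p, F)`. -/
def schedExp {m n : ℕ} (Sch : Fin m → Finpartition (univ : Finset (Fin n)))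
    (p : Fin m → ℝ) (F : Fin n → Finset (Fin m) → ℝ) : ℝ :=
  ∑ T : Finset (Fin m × Fin n), (∏ l, F l (Hl l T)) * schedMeasure Sch p T

def IncreasingAt {m : ℕ} (f : Finset (Fin m) → ℝ) (h : Fin m) : Prop :=
  ∀ S : Finset (Fin m), f S ≤ f (insert h S)

def DecreasingAt {m : ℕ} (f : Finset (Fin m) → ℝ) (h : Fin m) : Prop :=
  ∀ S : Finset (Fin m), f (insert h S) ≤ f S

def Aligned {m n : ℕ} (F : Fin n → Finset (Fin m) → ℝ) : Prop :=
  ∀ h : Fin m, (∀ l, IncreasingAt (F l) h) ∨ (∀ l, DecreasingAt (F l) h)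

/-- `Sch'` is coarser than `Sch`. -/
def Coarser {m n : ℕ} (Sch' Sch : Fin m → Finpartition (univ : Finset (Fin n))) : Prop :=
  ∀ h, ∀ M ∈ (Sch h).parts, ∃ M' ∈ (Sch' h).parts, M ⊆ M'

/-- Expectation with respect to the product Bernoulli measure. -/
def bernExp {m : ℕ} (p : Fin m → ℝ) (f : Finset (Fin m) → ℝ) : ℝ :=
  ∑ S : Finset (Fin m), f S * bern p S


/-- Chebyshev-type inequality for a two-point distribution: the product of the expectations of
nonnegative, similarly ordered variables is at most the expectation of their product. -/
theorem prod_convexComb_le {ι : Type*} (P : Finset ι) {p : ℝ} (hp0 : 0 ≤ p) (hp1 : p ≤ 1)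
    (a b : ι → ℝ) (hb : ∀ i, 0 ≤ b i) (hab : ∀ i, b i ≤ a i) :
    ∏ i ∈ P, (p * a i + (1 - p) * b i) ≤ p * ∏ i ∈ P, a i + (1 - p) * ∏ i ∈ P, b i := by
  classical
  induction P using Finset.induction_on with
  | empty => simp
  | insert i P hi ih =>
    rw [prod_insert hi, prod_insert hi, prod_insert hi]
    have hBA : ∏ i ∈ P, b i ≤ ∏ i ∈ P, a i := prod_le_prod (fun i _ => hb i) fun i _ => hab i
    have hq : 0 ≤ 1 - p := by linarith
    have hmean : 0 ≤ p * a i + (1 - p) * b i :=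
      add_nonneg (mul_nonneg hp0 ((hb i).trans (hab i))) (mul_nonneg hq (hb i))
    refine (mul_le_mul_of_nonneg_left ih hmean).trans ?_
    nlinarith [mul_nonneg (mul_nonneg hp0 hq)
      (mul_nonneg (sub_nonneg.2 (hab i)) (sub_nonneg.2 hBA))]

theorem partMeasure_nonneg {n : ℕ} (pt : Finpartition (univ : Finset (Fin n))) {p : ℝ}
    (hp0 : 0 ≤ p) (hp1 : p ≤ 1) (S : Finset (Fin n)) : 0 ≤ partMeasure pt p S := by
  refine prod_nonneg fun M _ => ?_
  unfold blockWeight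
  split_ifs <;> linarith

/-- A point lies in a union of parts iff the part containing it is one of them. -/
theorem Finpartition.mem_biUnion_iff_of_mem_part {n : ℕ} (pt : Finpartition (univ : Finset (Fin n)))
    {Q : Finset (Finset (Fin n))} (hQ : Q ⊆ pt.parts) {M : Finset (Fin n)} (hM : M ∈ pt.parts)
    {l : Fin n} (hl : l ∈ M) : l ∈ Q.biUnion id ↔ M ∈ Q := by
  constructor
  · intro h
    obtain ⟨N, hN, hlN⟩ := mem_biUnion.1 h
    rwa [pt.eq_of_mem_parts hM (hQ hN) hl hlN]
  · exact fun h => mem_biUnion.2 ⟨M, h, hl⟩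

/-- Under `partMeasure` distinct blocks are independent, so the expectation of a product over
`Fin n` factors over the blocks. -/
theorem sum_partMeasure_mul_prod {n : ℕ} (pt : Finpartition (univ : Finset (Fin n))) (p : ℝ)
    (u v : Fin n → ℝ) :
    ∑ S : Finset (Fin n), (∏ l, if l ∈ S then u l else v l) * partMeasure pt p S =
      ∏ M ∈ pt.parts, (p * ∏ l ∈ M, u l + (1 - p) * ∏ l ∈ M, v l) := by
  rw [prod_add]
  symm
  refine sum_of_injOn (fun Q => Q.biUnion id) ?_ (fun _ _ => by simp) ?_ ?_
  · intro Q hQ R hR hQR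
    simp only [coe_powerset, Set.mem_preimage, Set.mem_powerset_iff, coe_subset] at hQ hR
    ext M
    by_cases hM : M ∈ pt.parts
    · obtain ⟨l, hl⟩ := pt.nonempty_of_mem_parts hM
      rw [← pt.mem_biUnion_iff_of_mem_part hQ hM hl, ← pt.mem_biUnion_iff_of_mem_part hR hM hl]
      simp only at hQR
      rw [hQR]
    · exact iff_of_false (fun h => hM (hQ h)) fun h => hM (hR h)
  · intro S _ hS
    by_contra hne
    have hw : ∀ M ∈ pt.parts, blockWeight p M S ≠ 0 :=
      prod_ne_zero_iff.1 (right_ne_zero_of_mul hne)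
    refine hS ⟨pt.parts.filter (· ⊆ S), mem_coe.2 (mem_powerset.2 (filter_subset _ _)), ?_⟩
    ext l
    simp only [mem_biUnion, mem_filter, id]
    constructor
    · rintro ⟨M, ⟨_, hMS⟩, hl⟩
      exact hMS hl
    · intro hl
      obtain ⟨M, hM, hlM⟩ := pt.exists_mem (mem_univ l)
      refine ⟨M, ⟨hM, ?_⟩, hlM⟩
      by_contra hMS
      have hdisj : M ∩ S ≠ ∅ := nonempty_iff_ne_empty.1 ⟨l, mem_inter.2 ⟨hlM, hl⟩⟩
      exact hw M hM (by simp [blockWeight, hMS, hdisj])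
  · intro Q hQ
    rw [mem_powerset] at hQ
    have hprod : (∏ l, if l ∈ Q.biUnion id then u l else v l) =
        ∏ M ∈ pt.parts, if M ∈ Q then ∏ l ∈ M, u l else ∏ l ∈ M, v l := by
      conv_lhs => rw [← pt.biUnion_parts]
      rw [prod_biUnion pt.disjoint]
      refine prod_congr rfl fun M hM => ?_
      have hmem : ∀ l ∈ id M, (l ∈ Q.biUnion id ↔ M ∈ Q) := fun l hl =>
        pt.mem_biUnion_iff_of_mem_part hQ hM hl
      split_ifs with h
      · exact prod_congr rfl fun l hl => if_pos ((hmem l hl).2 h)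
      · exact prod_congr rfl fun l hl => if_neg fun hl' => h ((hmem l hl).1 hl')
    have hweight : ∀ M ∈ pt.parts,
        blockWeight p M (Q.biUnion id) = if M ∈ Q then p else 1 - p := by
      intro M hM
      obtain ⟨l, hl⟩ := pt.nonempty_of_mem_parts hM
      unfold blockWeight
      by_cases h : M ∈ Q
      · have hsub : M ⊆ Q.biUnion id := fun x hx => (pt.mem_biUnion_iff_of_mem_part hQ hM hx).2 h
        rw [if_pos h, if_pos hsub]
      · rw [if_neg h, if_neg fun hs => h ((pt.mem_biUnion_iff_of_mem_part hQ hM hl).1 (hs hl)), if_pos]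
        rw [← disjoint_iff_inter_eq_empty, disjoint_left]
        exact fun x hx hx' => h ((pt.mem_biUnion_iff_of_mem_part hQ hM hx).1 hx')
    rw [hprod, partMeasure, prod_congr rfl hweight, ← prod_mul_distrib,
      ← prod_sdiff hQ, mul_comm]
    congr 1
    · refine prod_congr rfl fun M hM => ?_
      have h := (mem_sdiff.1 hM).2
      simp [h, mul_comm]
    · refine prod_congr rfl fun M hM => ?_
      simp [hM, mul_comm]

/-- Merging all blocks increases the expectation of a product of similarly ordered functions. -/
theorem sum_partMeasure_le_of_parts_eq {n : ℕ} (pt triv : Finpartition (univ : Finset (Fin n)))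
    (htriv : triv.parts = {univ}) {p : ℝ} (hp0 : 0 ≤ p) (hp1 : p ≤ 1) (u v : Fin n → ℝ)
    (hu : ∀ l, 0 ≤ u l) (hv : ∀ l, 0 ≤ v l) (huv : (∀ l, v l ≤ u l) ∨ ∀ l, u l ≤ v l) :
    ∑ S : Finset (Fin n), (∏ l, if l ∈ S then u l else v l) * partMeasure pt p S ≤
      ∑ S : Finset (Fin n), (∏ l, if l ∈ S then u l else v l) * partMeasure triv p S := by
  have hsplit : ∀ w : Fin n → ℝ, ∏ M ∈ pt.parts, ∏ l ∈ M, w l = ∏ l, w l := fun w => by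
    conv_rhs => rw [← pt.biUnion_parts]
    rw [prod_biUnion pt.disjoint]
    rfl
  rw [sum_partMeasure_mul_prod, sum_partMeasure_mul_prod, htriv, prod_singleton,
    ← hsplit u, ← hsplit v]
  rcases huv with h | h
  · exact prod_convexComb_le _ hp0 hp1 _ _ (fun M => prod_nonneg fun l _ => hv l)
      fun M => prod_le_prod (fun l _ => hv l) fun l _ => h l
  · have := prod_convexComb_le pt.parts (p := 1 - p) (by linarith) (by linarith)
      (fun M => ∏ l ∈ M, v l) (fun M => ∏ l ∈ M, u l) (fun M => prod_nonneg fun l _ => hu l)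
      fun M => prod_le_prod (fun l _ => hu l) fun l _ => h l
    simpa only [sub_sub_cancel, add_comm] using this

/-- Product measures may be compared one coordinate at a time. -/
theorem sum_mul_prod_le_of_coordinatewise {α : Type*} [Fintype α] {m : ℕ}
    (μ ν : Fin m → α → ℝ) (hμ : ∀ h x, 0 ≤ μ h x) (hν : ∀ h x, 0 ≤ ν h x)
    (G : (Fin m → α) → ℝ)
    (hG : ∀ h s, ∑ x, G (Function.update s h x) * μ h x ≤
      ∑ x, G (Function.update s h x) * ν h x) :
    ∑ s, G s * ∏ h, μ h (s h) ≤ ∑ s, G s * ∏ h, ν h (s h) := by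
  induction m with
  | zero => simp
  | succ m ih =>
    have hcons : ∀ f : (Fin (m + 1) → α) → ℝ,
        ∑ s, f s = ∑ x : α, ∑ t : Fin m → α, f (Fin.cons x t) := fun f => by
      rw [← (Fin.consEquiv fun _ => α).sum_comp, Fintype.sum_prod_type]
      rfl
    simp only [hcons, Fin.prod_univ_succ, Fin.cons_zero, Fin.cons_succ]
    calc ∑ x, ∑ t : Fin m → α, G (Fin.cons x t) * (μ 0 x * ∏ h : Fin m, μ h.succ (t h))
        = ∑ x, μ 0 x * ∑ t : Fin m → α, G (Fin.cons x t) * ∏ h : Fin m, μ h.succ (t h) := by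
          simp only [mul_sum, mul_left_comm]
      _ ≤ ∑ x, μ 0 x * ∑ t : Fin m → α, G (Fin.cons x t) * ∏ h : Fin m, ν h.succ (t h) := by
          refine sum_le_sum fun x _ => mul_le_mul_of_nonneg_left ?_ (hμ 0 x)
          refine ih (fun h => μ h.succ) (fun h => ν h.succ) (fun h => hμ h.succ)
            (fun h => hν h.succ) (fun t => G (Fin.cons x t)) fun h t => ?_
          simpa only [Fin.cons_update] using hG h.succ (Fin.cons x t)
      _ = ∑ t : Fin m → α, (∏ h : Fin m, ν h.succ (t h)) * ∑ x, G (Fin.cons x t) * μ 0 x := by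
          simp only [mul_sum]
          rw [sum_comm]
          exact sum_congr rfl fun t _ => sum_congr rfl fun x _ => by ring
      _ ≤ ∑ t : Fin m → α, (∏ h : Fin m, ν h.succ (t h)) * ∑ x, G (Fin.cons x t) * ν 0 x := by
          refine sum_le_sum fun t _ => mul_le_mul_of_nonneg_left ?_
            (prod_nonneg fun h _ => hν h.succ (t h))
          rcases isEmpty_or_nonempty α with hα | ⟨⟨x₀⟩⟩
          · simp
          · simpa only [Fin.update_cons_zero] using hG 0 (Fin.cons x₀ t)
      _ = ∑ x, ∑ t : Fin m → α, G (Fin.cons x t) * (ν 0 x * ∏ h : Fin m, ν h.succ (t h)) := by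
          simp only [mul_sum]
          rw [sum_comm]
          exact sum_congr rfl fun t _ => sum_congr rfl fun x _ => by ring

/-- A subset of `Fin m × Fin n` is the same as its family of sections over `Fin m`. -/
def sectionsEquiv (m n : ℕ) : Finset (Fin m × Fin n) ≃ (Fin m → Finset (Fin n)) where
  toFun T h := Lh h T
  invFun s := univ.filter fun x => x.2 ∈ s x.1
  left_inv T := by ext; simp [Lh]
  right_inv s := by ext; simp [Lh]

theorem schedExp_eq_sum_sections {m n : ℕ} (Sch : Fin m → Finpartition (univ : Finset (Fin n)))
    (p : Fin m → ℝ) (F : Fin n → Finset (Fin m) → ℝ) :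
    schedExp Sch p F = ∑ s : Fin m → Finset (Fin n),
      (∏ l, F l (univ.filter fun h => l ∈ s h)) * ∏ h, partMeasure (Sch h) (p h) (s h) := by
  rw [← (sectionsEquiv m n).sum_comp]
  refine sum_congr rfl fun T _ => ?_
  simp [sectionsEquiv, schedMeasure, Hl, Lh]

/-- The fully simultaneous polling schedule (every voter's partition has the single
block `L`) maximizes the expectation of an aligned tuple of nonnegative functions over
all staggered schedules. -/
theorem simultaneous_schedule_maximizes {m n : ℕ}
    (p : Fin m → ℝ) (hp : ∀ h, 0 ≤ p h ∧ p h ≤ 1)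
    (F : Fin n → Finset (Fin m) → ℝ)
    (hFnonneg : ∀ l S, 0 ≤ F l S) (hFaligned : Aligned F)
    (SchSimul : Fin m → Finpartition (univ : Finset (Fin n)))
    (hSimul : ∀ h, (SchSimul h).parts = {(univ : Finset (Fin n))}) :
    ∀ Sch : Fin m → Finpartition (univ : Finset (Fin n)),
      schedExp Sch p F ≤ schedExp SchSimul p F := by
  intro Sch
  rw [schedExp_eq_sum_sections, schedExp_eq_sum_sections]
  refine sum_mul_prod_le_of_coordinatewise (fun h => partMeasure (Sch h) (p h))
    (fun h => partMeasure (SchSimul h) (p h))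
    (fun h => partMeasure_nonneg _ (hp h).1 (hp h).2)
    (fun h => partMeasure_nonneg _ (hp h).1 (hp h).2)
    (fun s => ∏ l, F l (univ.filter fun h => l ∈ s h)) fun h s => ?_
  let R : Fin n → Finset (Fin m) := fun l => univ.filter fun k => k ≠ h ∧ l ∈ s k
  have hsection : ∀ S : Finset (Fin n),
      ∏ l, F l (univ.filter fun k => l ∈ Function.update s h S k) =
        ∏ l, if l ∈ S then F l (insert h (R l)) else F l (R l) := by
    intro S
    refine prod_congr rfl fun l _ => ?_
    split_ifs with hl
    all_goals
      congr 1
      ext k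
      by_cases hk : k = h
      · subst hk
        simp [R, hl]
      · simp [R, hk]
  simp only [hsection]
  refine sum_partMeasure_le_of_parts_eq _ _ (hSimul h) (hp h).1 (hp h).2 _ _
    (fun l => hFnonneg l _) (fun l => hFnonneg l _) ?_
  exact (hFaligned h).imp (fun H l => H l _) fun H l => H l _
end
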